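/- Key step of Theorem 1 (best-responding attacks break the Defender's optimality): Let λ ∈ (0,1), ε₂ ∈ (0,1), and let h be a Borel classifier X → {−1,0,1}. Suppose the attack φ = (φ₋₁, φ₁) satisfies: φ₁(x) ∈ X∖P_h for every x ∈ P_h(ε₂) and φ₁(x) = x for every x ∉ P_h(ε₂); and φ₋₁(x) ∈ X∖N_h for every x ∈ N_h(ε₂) and φ₋₁(x) = x for every x ∉ N_h(ε₂). Then (φ₁#μ₁)(P_h(ε₂)) = 0 and (φ₋₁#μ₋₁)(P_h(ε₂)) ≥ μ₋₁(P_h(ε₂)). Consequently, if μ₋₁(P_h(ε₂)) > 0 then ν₋₁·(φ₋₁#μ₋₁)(P_h(ε₂)) > ν₁·(φ₁#μ₁)(P_h(ε₂)), and h does not minimize h′ ↦ R(h′,φ) over Borel classifiers h′ : X → {−1,0,1}. -/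

import Mathlib

open MeasureTheory Metric Set

noncomputable section

namespace AdvGame

variable {d : ℕ} {X : Set (EuclideanSpace ℝ (Fin d))}

/-- The sign classifier associated with a score function `g`:
outputs `1` if `g x > 0`, `-1` if `g x < 0`, and `0` if `g x = 0`. -/
def signClf (g : X → ℝ) : X → ℤ :=
  fun x => if 0 < g x then 1 else if g x < 0 then -1 else 0

/-- Membership in the hypothesis class `H = {sign ∘ g | g continuous}`. -/
def InH (h : X → ℤ) : Prop := ∃ g : X → ℝ, Continuous g ∧ h = signClf g

/-- A (Borel) classifier with values in `{-1, 0, 1}`. -/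
def IsClf (h : X → ℤ) : Prop := Measurable h ∧ ∀ x, h x = 1 ∨ h x = -1 ∨ h x = 0

/-- The positive region of a classifier. -/
def Ph (h : X → ℤ) : Set X := {x | h x = 1}

/-- The negative region of a classifier. -/
def Nh (h : X → ℤ) : Set X := {x | h x = -1}

/-- The attackable part of the positive region:
points of `P_h` at distance at most `δ` from `X ∖ P_h`. -/
def PhD (h : X → ℤ) (δ : ℝ) : Set X := {x | x ∈ Ph h ∧ infDist x (Ph h)ᶜ ≤ δ}

/-- The attackable part of the negative region. -/
def NhD (h : X → ℤ) (δ : ℝ) : Set X := {x | x ∈ Nh h ∧ infDist x (Nh h)ᶜ ≤ δ}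

/-- An attack (for one label): a Borel map `X → X` moving each point by at most `ε`. -/
def IsAttack (ε : ℝ) (φ : X → X) : Prop := Measurable φ ∧ ∀ x, dist (φ x) x ≤ ε

/-- A measure has full support `X`. -/
def FullSupport (μ : Measure X) : Prop := ∀ U : Set X, IsOpen U → U.Nonempty → 0 < μ U

/-- Adversarial risk `R(h, φ)` of a classifier `h` under the attack `φ = (φm, φp)`. -/
def advRisk (ν1 νm1 : ℝ) (μ1 μm1 : Measure X) (h : X → ℤ) (φm φp : X → X) : ℝ :=
  ν1 * ((μ1.map φp) {x | h x ≠ 1}).toReal + νm1 * ((μm1.map φm) {x | h x ≠ -1}).toReal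

/-- Standard (unattacked) risk `R(h)`. -/
def stdRisk (ν1 νm1 : ℝ) (μ1 μm1 : Measure X) (h : X → ℤ) : ℝ :=
  ν1 * (μ1 {x | h x ≠ 1}).toReal + νm1 * (μm1 {x | h x ≠ -1}).toReal

/-- The mass penalty `Ω_mass(φ)`. -/
def massPen (ν1 νm1 : ℝ) (μ1 μm1 : Measure X) (φm φp : X → X) : ℝ :=
  ν1 * (μ1 {x | φp x ≠ x}).toReal + νm1 * (μm1 {x | φm x ≠ x}).toReal

/-- The norm penalty `Ω_norm(φ)`. -/
def normPen (ν1 νm1 : ℝ) (μ1 μm1 : Measure X) (φm φp : X → X) : ℝ :=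
  ν1 * ∫ x, dist x (φp x) ∂μ1 + νm1 * ∫ x, dist x (φm x) ∂μm1

/-- Regularized adversarial score with the mass penalty. -/
def scoreMass (ν1 νm1 : ℝ) (μ1 μm1 : Measure X) (lam : ℝ) (h : X → ℤ)
    (φm φp : X → X) : ℝ :=
  advRisk ν1 νm1 μ1 μm1 h φm φp - lam * massPen ν1 νm1 μ1 μm1 φm φp

/-- Regularized adversarial score with the norm penalty. -/
def scoreNorm (ν1 νm1 : ℝ) (μ1 μm1 : Measure X) (lam : ℝ) (h : X → ℤ)
    (φm φp : X → X) : ℝ :=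
  advRisk ν1 νm1 μ1 μm1 h φm φp - lam * normPen ν1 νm1 μ1 μm1 φm φp

/-- Best response of the Adversary to `h` w.r.t. the mass penalty. -/
def BRmass (ν1 νm1 : ℝ) (μ1 μm1 : Measure X) (lam ε : ℝ) (h : X → ℤ)
    (φm φp : X → X) : Prop :=
  IsAttack ε φm ∧ IsAttack ε φp ∧
    ∀ ψm ψp : X → X, IsAttack ε ψm → IsAttack ε ψp →
      scoreMass ν1 νm1 μ1 μm1 lam h ψm ψp ≤ scoreMass ν1 νm1 μ1 μm1 lam h φm φp

/-- Best response of the Adversary to `h` w.r.t. the norm penalty. -/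
def BRnorm (ν1 νm1 : ℝ) (μ1 μm1 : Measure X) (lam ε : ℝ) (h : X → ℤ)
    (φm φp : X → X) : Prop :=
  IsAttack ε φm ∧ IsAttack ε φp ∧
    ∀ ψm ψp : X → X, IsAttack ε ψm → IsAttack ε ψp →
      scoreNorm ν1 νm1 μ1 μm1 lam h ψm ψp ≤ scoreNorm ν1 νm1 μ1 μm1 lam h φm φp

/-- Adversarial risk of the mixture playing `h1` with probability `α`
and `h2` with probability `1 - α`. -/
def mixRisk (ν1 νm1 : ℝ) (μ1 μm1 : Measure X) (α : ℝ) (h1 h2 : X → ℤ)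
    (φm φp : X → X) : ℝ :=
  ν1 * ∫ z, (α * (if h1 z ≠ 1 then (1:ℝ) else 0)
      + (1 - α) * (if h2 z ≠ 1 then (1:ℝ) else 0)) ∂(μ1.map φp)
  + νm1 * ∫ z, (α * (if h1 z ≠ -1 then (1:ℝ) else 0)
      + (1 - α) * (if h2 z ≠ -1 then (1:ℝ) else 0)) ∂(μm1.map φm)

/-- Regularized adversarial score of the mixture, mass penalty. -/
def mixScoreMass (ν1 νm1 : ℝ) (μ1 μm1 : Measure X) (lam α : ℝ) (h1 h2 : X → ℤ)
    (φm φp : X → X) : ℝ :=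
  mixRisk ν1 νm1 μ1 μm1 α h1 h2 φm φp - lam * massPen ν1 νm1 μ1 μm1 φm φp

/-- Regularized adversarial score of the mixture, norm penalty. -/
def mixScoreNorm (ν1 νm1 : ℝ) (μ1 μm1 : Measure X) (lam α : ℝ) (h1 h2 : X → ℤ)
    (φm φp : X → X) : ℝ :=
  mixRisk ν1 νm1 μ1 μm1 α h1 h2 φm φp - lam * normPen ν1 νm1 μ1 μm1 φm φp


/-- Key step of Theorem 1: an attack which moves exactly the attackable
positive points out of `P_h` (and fixes everything else on the positive class)
and likewise for the negative class empties `P_h(ε₂)` of attacked positive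
mass while preserving its negative mass; consequently, if `μ₋₁(P_h(ε₂)) > 0`,
the Defender `h` no longer best-responds to this attack. -/
theorem bestResponse_attack_breaks_defender
    (hXc : IsClosed X) (hXne : X.Nonempty)
    (ν1 νm1 : ℝ) (hν1 : ν1 ∈ Set.Ioo (0:ℝ) 1) (hνm1 : νm1 ∈ Set.Ioo (0:ℝ) 1)
    (hνsum : ν1 + νm1 = 1)
    (μ1 μm1 : Measure X) [IsProbabilityMeasure μ1] [IsProbabilityMeasure μm1]
    (hμ1 : FullSupport μ1) (hμm1 : FullSupport μm1)
    (lam ε2 : ℝ) (hlam : lam ∈ Set.Ioo (0:ℝ) 1) (hε2 : ε2 ∈ Set.Ioo (0:ℝ) 1)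
    (h : X → ℤ) (hclf : IsClf h)
    (φm φp : X → X) (hφm : IsAttack ε2 φm) (hφp : IsAttack ε2 φp)
    (hφp1 : ∀ x ∈ PhD h ε2, φp x ∈ (Ph h)ᶜ)
    (hφp2 : ∀ x ∉ PhD h ε2, φp x = x)
    (hφm1 : ∀ x ∈ NhD h ε2, φm x ∈ (Nh h)ᶜ)
    (hφm2 : ∀ x ∉ NhD h ε2, φm x = x) :
    (μ1.map φp) (PhD h ε2) = 0 ∧
    μm1 (PhD h ε2) ≤ (μm1.map φm) (PhD h ε2) ∧
    (0 < μm1 (PhD h ε2) →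
      ν1 * ((μ1.map φp) (PhD h ε2)).toReal <
        νm1 * ((μm1.map φm) (PhD h ε2)).toReal ∧
      ¬ (∀ h' : X → ℤ, IsClf h' →
        advRisk ν1 νm1 μ1 μm1 h φm φp ≤ advRisk ν1 νm1 μ1 μm1 h' φm φp)) := by
  have hP : MeasurableSet (Ph h) := hclf.1 (measurableSet_singleton (1:ℤ))
  have hD : MeasurableSet (PhD h ε2) :=
    hP.inter ((Metric.continuous_infDist_pt (Ph h)ᶜ).measurable measurableSet_Iic)
  have h0 : (μ1.map φp) (PhD h ε2) = 0 := by
    rw [Measure.map_apply hφp.1 hD]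
    have : φp ⁻¹' (PhD h ε2) = ∅ := by
      ext x
      simp only [mem_preimage, mem_empty_iff_false, iff_false]
      intro hx
      by_cases hx' : x ∈ PhD h ε2
      · exact hφp1 x hx' hx.1
      · rw [hφp2 x hx'] at hx
        exact hx' hx
    rw [this, measure_empty]
  have h1 : μm1 (PhD h ε2) ≤ (μm1.map φm) (PhD h ε2) := by
    rw [Measure.map_apply hφm.1 hD]
    apply measure_mono
    intro x hx
    have hn : x ∉ NhD h ε2 := by
      intro hx'
      have a : h x = 1 := hx.1
      have b : h x = -1 := hx'.1
      omega
    simpa only [mem_preimage, hφm2 x hn] using hx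
  refine ⟨h0, h1, fun hpos => ?_⟩
  haveI : IsProbabilityMeasure (μm1.map φm) := Measure.isProbabilityMeasure_map hφm.1.aemeasurable
  have hpos' : 0 < ((μm1.map φm) (PhD h ε2)).toReal :=
    ENNReal.toReal_pos (hpos.trans_le h1).ne' (measure_ne_top _ _)
  have hprod := mul_pos hνm1.1 hpos'
  refine ⟨by simpa [h0] using hprod, fun hall => ?_⟩
  classical
  let h' : X → ℤ := fun x => if x ∈ PhD h ε2 then -1 else h x
  have hc' : IsClf h' := by
    refine ⟨Measurable.ite hD measurable_const hclf.1, fun x => ?_⟩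
    by_cases hx : x ∈ PhD h ε2
    · simp [h', hx]
    · simpa [h', hx] using hclf.2 x
  have hle := hall h' hc'
  have e1 : {x | h' x ≠ 1} = {x | h x ≠ 1} ∪ PhD h ε2 := by
    ext x
    by_cases hx : x ∈ PhD h ε2 <;> simp [h', hx]
  have e2 : {x | h' x ≠ -1} = {x | h x ≠ -1} \ PhD h ε2 := by
    ext x
    by_cases hx : x ∈ PhD h ε2 <;> simp [h', hx]
  have hsub : PhD h ε2 ⊆ {x | h x ≠ -1} := by
    intro x hx
    have a : h x = 1 := hx.1
    simp [a]
  have m1 : (μ1.map φp) {x | h' x ≠ 1} = (μ1.map φp) {x | h x ≠ 1} := by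
    rw [e1]
    exact le_antisymm ((measure_union_le _ _).trans (by rw [h0, add_zero])) (measure_mono subset_union_left)
  have m2 : ((μm1.map φm) {x | h' x ≠ -1}).toReal =
      ((μm1.map φm) {x | h x ≠ -1}).toReal - ((μm1.map φm) (PhD h ε2)).toReal := by
    rw [e2, measure_diff hsub hD.nullMeasurableSet (measure_ne_top _ _),
      ENNReal.toReal_sub_of_le (measure_mono hsub) (measure_ne_top _ _)]
  unfold advRisk at hle
  rw [m1, m2] at hle
  linarith

end AdvGame
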